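/- arXiv:1902.08949 — 9 statements merged into one kernel-verified Lean document; each statement's English description precedes it below -/
import Mathlib

section
/- Let A be a nonsingular real n×n matrix and α₁, α₂, β₁, β₂ real numbers, and let F₁ be the real 4n×4n block matrix F₁ = [[I, −(α₁+β₁)A, 0, β₁A], [(α₂+β₂)Aᵀ, I, −β₂Aᵀ, 0], [I, 0, 0, 0], [0, I, 0, 0]]. Then every complex eigenvalue λ of F₁ satisfies λ²(1−λ)² + (λ(α₂+β₂) − β₂)(λ(α₁+β₁) − β₁)ζ = 0 for some eigenvalue ζ of AᵀA. -/
/-!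
Write an eigenvector of `F₁` as `(x, y, p, q)`. The lower block row gives `x = λp` and `y = λq`,
so the upper one becomes `c p = a A q`, `c q = -b Aᵀ p` with `c = λ(1-λ)`,
`a = λ(α₁+β₁) - β₁`, `b = λ(α₂+β₂) - β₂`. Hence `c² q = -ab AᵀA q`.
If `q ≠ 0` and `ab ≠ 0`, then `q` is an eigenvector of `AᵀA` for `ζ = -c²/(ab)`.
In the remaining cases `c = 0` and `ab = 0` (for `q = 0` this uses that `Aᵀ` is injective),
so the quartic vanishes for every `ζ`, and it suffices that `AᵀA` has some eigenvalue.
-/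

open Matrix

/-- The elimination argument, for the reduced system of an eigenvector's last two blocks. -/
lemma exists_eigenvalue_of_reduced {n : ℕ} (B : Matrix (Fin n) (Fin n) ℂ) (hB : IsUnit B)
    (a b c : ℂ) (p q : Fin n → ℂ) (hpq : ¬ (p = 0 ∧ q = 0))
    (h1 : c • p = a • (B *ᵥ q)) (h2 : c • q = (-b) • (Bᵀ *ᵥ p)) :
    ∃ ζ : ℂ, (∃ w : Fin n → ℂ, w ≠ 0 ∧ (Bᵀ * B) *ᵥ w = ζ • w) ∧ c ^ 2 + b * a * ζ = 0 := by
  have key : (c ^ 2) • q = (-(b * a)) • ((Bᵀ * B) *ᵥ q) := by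
    rw [sq, mul_smul, h2, smul_comm, ← mulVec_smul, h1, mulVec_smul, smul_smul, mulVec_mulVec,
      neg_mul]
  by_cases hdeg : c = 0 ∧ b * a = 0
  · have : Nontrivial (Fin n → ℂ) := by
      by_contra h
      rw [not_nontrivial_iff_subsingleton] at h
      exact hpq ⟨Subsingleton.elim _ _, Subsingleton.elim _ _⟩
    obtain ⟨ζ, hζ⟩ := Module.End.exists_eigenvalue (Matrix.toLin' (Bᵀ * B))
    obtain ⟨w, hw⟩ := hζ.exists_hasEigenvector
    refine ⟨ζ, ⟨w, hw.2, ?_⟩, by simp [hdeg.1, hdeg.2]⟩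
    simpa using hw.apply_eq_smul
  · have hq : q ≠ 0 := by
      rintro rfl
      have hp : p ≠ 0 := fun h => hpq ⟨h, rfl⟩
      have hc : c = 0 := by simpa [hp] using h1
      have hBp : Bᵀ *ᵥ p ≠ 0 := fun h =>
        hp (Matrix.mulVec_injective_of_isUnit ((Matrix.isUnit_transpose B).2 hB)
          (h.trans (mulVec_zero _).symm))
      have hb : b = 0 := by simpa [hBp] using h2
      exact hdeg ⟨hc, by simp [hb]⟩
    have hab : b * a ≠ 0 := by
      intro h
      rw [h] at key
      exact hdeg ⟨by simpa [hq] using key, h⟩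
    refine ⟨-(c ^ 2) / (b * a), ⟨q, hq, ?_⟩, by
      rw [mul_div_assoc', mul_div_cancel_left₀ _ hab]; ring⟩
    rw [div_eq_inv_mul, mul_smul, neg_smul, key, neg_smul, neg_neg, smul_smul,
      inv_mul_cancel₀ hab, one_smul]

/-- Every complex eigenvalue `λ` of the Grad-SCA update matrix `F₁` for the bilinear
game with a nonsingular matrix `A` is a root of the quartic
`λ²(1−λ)² + (λ(α₂+β₂) − β₂)(λ(α₁+β₁) − β₁)ζ` for some eigenvalue `ζ` of `AᵀA`. -/
theorem stmt_1 {n : ℕ} (A : Matrix (Fin n) (Fin n) ℝ) (hA : IsUnit A)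
    (α₁ α₂ β₁ β₂ : ℝ)
    (F₁ : Matrix ((Fin n ⊕ Fin n) ⊕ (Fin n ⊕ Fin n)) ((Fin n ⊕ Fin n) ⊕ (Fin n ⊕ Fin n)) ℝ)
    (hF₁ : F₁ = fromBlocks
      (fromBlocks 1 ((-(α₁ + β₁)) • A) ((α₂ + β₂) • Aᵀ) 1)
      (fromBlocks 0 (β₁ • A) ((-β₂) • Aᵀ) 0)
      (fromBlocks 1 0 0 1)
      0)
    (lam : ℂ)
    (hlam : ∃ v : ((Fin n ⊕ Fin n) ⊕ (Fin n ⊕ Fin n)) → ℂ, v ≠ 0 ∧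
      (F₁.map (fun a => (a : ℂ))).mulVec v = lam • v) :
    ∃ ζ : ℂ,
      (∃ w : Fin n → ℂ, w ≠ 0 ∧ ((Aᵀ * A).map (fun a => (a : ℂ))).mulVec w = ζ • w) ∧
      lam ^ 2 * (1 - lam) ^ 2
        + (lam * ((α₂ : ℂ) + (β₂ : ℂ)) - (β₂ : ℂ))
          * (lam * ((α₁ : ℂ) + (β₁ : ℂ)) - (β₁ : ℂ)) * ζ = 0 := by
  obtain ⟨v, hv, h⟩ := hlam
  set B : Matrix (Fin n) (Fin n) ℂ := A.map (fun a => (a : ℂ)) with hBdef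
  have hB : IsUnit B := hA.map (Complex.ofRealHom.mapMatrix : Matrix (Fin n) (Fin n) ℝ →+* _)
  have hBB : (Aᵀ * A).map (fun a => (a : ℂ)) = Bᵀ * B :=
    Matrix.map_mul (f := Complex.ofRealHom)
  obtain ⟨x, y, p, q, rfl⟩ : ∃ x y p q : Fin n → ℂ,
      v = Sum.elim (Sum.elim x y) (Sum.elim p q) :=
    ⟨fun i => v (.inl (.inl i)), fun i => v (.inl (.inr i)), fun i => v (.inr (.inl i)),
      fun i => v (.inr (.inr i)), by ext ((i | i) | (i | i)) <;> rfl⟩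
  have hF : F₁.map (fun a => (a : ℂ)) = fromBlocks
      (fromBlocks 1 ((-(α₁ + β₁) : ℂ) • B) ((α₂ + β₂ : ℂ) • Bᵀ) 1)
      (fromBlocks 0 ((β₁ : ℂ) • B) ((-β₂ : ℂ) • Bᵀ) 0)
      (fromBlocks 1 0 0 1) 0 := by
    subst hF₁
    ext ((i | i) | (i | i)) ((j | j) | (j | j)) <;>
      simp [B, Matrix.one_apply, apply_ite]
  rw [hF] at h
  have hx : ∀ i, x i = lam * p i := fun i => by
    simpa [fromBlocks_mulVec] using congrFun h (.inr (.inl i))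
  have hy : ∀ i, y i = lam * q i := fun i => by
    simpa [fromBlocks_mulVec] using congrFun h (.inr (.inr i))
  obtain rfl : x = lam • p := funext hx
  obtain rfl : y = lam • q := funext hy
  rw [hBB]
  obtain ⟨ζ, hw, hζ⟩ := exists_eigenvalue_of_reduced B hB (lam * (α₁ + β₁) - β₁)
    (lam * (α₂ + β₂) - β₂) (lam * (1 - lam)) p q
    (by
      rintro ⟨rfl, rfl⟩
      exact hv (by ext ((i | i) | (i | i)) <;> simp))
    (by
      ext i
      have := congrFun h (.inl (.inl i))
      simp [fromBlocks_mulVec, smul_mulVec, mulVec_smul, neg_mulVec] at this ⊢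
      linear_combination this)
    (by
      ext i
      have := congrFun h (.inl (.inr i))
      simp [fromBlocks_mulVec, smul_mulVec, mulVec_smul, neg_mulVec] at this ⊢
      linear_combination this)
  exact ⟨ζ, hw, by rw [← mul_pow]; exact hζ⟩
end

section
/- Let A be a nonsingular real d×d matrix and let α, β be real numbers satisfying 0 < α + β ≤ 1/√(λ_max(AᵀA)) and |α − β| ≤ √(λ_min(AᵀA)) · (α+β)²/10. Then for any Grad-SCA iterates (θ_t), (φ_t), the quantity Δ_t := ‖θ_t‖² + ‖φ_t‖² + ‖θ_{t+1}‖² + ‖φ_{t+1}‖² converges linearly to 0: there exist C > 0 and r ∈ [0,1) such that Δ_t ≤ C r^t for all t. -/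
/-!
Put `z = (θ, φ)` and `K (θ, φ) = (-Aφ, Aᵀθ)`, a skew-adjoint operator. With `s = α + β`, `T = sK` and
`b = β / s` the iteration reads `z (t+2) = (1 + T) z (t+1) - b T z t`. The bound on `α + β` gives
`‖T‖ ≤ 1`; since `λ_min ≤ λ_max` the bound on `α - β` gives `|2b - 1| ≤ 1/10`; and `T` is injective,
hence bounded below, because `A` is nonsingular.

On a (complex) eigenspace of `T` the iteration is a scalar second-order recursion, whose stability is
decided by the Schur–Cohn criterion: the coefficients of the Schur–Cohn Hermitian form are polynomials in `T`, so
the form makes sense without diagonalising (`energy`). It does not increase along the iteration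
(`energy_sub`) and is positive definite when `b` is near `1/2` (`energy_one_ge`). The decrease alone is
not strict, so the rate comes from applying the same form to the rescaled sequence `ρ ^ t • z t` with
`ρ > 1` close to `1`, for which positivity persists (`energy_ge`): the rescaled sequence stays bounded,
so `‖z t‖²` decays like `ρ ^ (-2t)` (`linear_rate`).
-/

open Matrix

/-- The largest (real) eigenvalue of a real square matrix. -/
noncomputable def lamMax {d : ℕ} (S : Matrix (Fin d) (Fin d) ℝ) : ℝ :=
  sSup {μ : ℝ | ∃ v : Fin d → ℝ, v ≠ 0 ∧ S.mulVec v = μ • v}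

/-- The smallest (real) eigenvalue of a real square matrix. -/
noncomputable def lamMin {d : ℕ} (S : Matrix (Fin d) (Fin d) ℝ) : ℝ :=
  sInf {μ : ℝ | ∃ v : Fin d → ℝ, v ≠ 0 ∧ S.mulVec v = μ • v}

/-! ### Schur–Cohn energy of the abstract skew recursion -/

section

open scoped RealInnerProductSpace

variable {E : Type*} [NormedAddCommGroup E] [InnerProductSpace ℝ E]

/-- The Schur–Cohn form of the scaled recursion `w = ρ(1 + T)y - bρ²Tx`, evaluated on the consecutive
states `x, y`. For commuting `a = -ρ(1 + T)` and `c = bρ²T` it is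
`⟨x, (1 - c*c)x⟩ + ⟨y, (1 - c*c)y⟩ + 2⟨y, (a - c a*)x⟩`, rewritten using `T* = -T`. -/
noncomputable def energy (T : E →ₗ[ℝ] E) (b ρ : ℝ) (x y : E) : ℝ :=
  ‖x‖ ^ 2 + ‖y‖ ^ 2 - b ^ 2 * ρ ^ 4 * (‖T x‖ ^ 2 + ‖T y‖ ^ 2) - 2 * ρ * ⟪y, x⟫
    - 2 * (ρ - b * ρ ^ 3) * ⟪y, T x⟫ + 2 * b * ρ ^ 3 * ⟪T y, T x⟫

/-- The Schur–Cohn identity: the increment of the energy is the squared residual of the recursion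
minus the squared residual of its reciprocal (time-reversed, adjoint) recursion. It holds for
arbitrary `x y w`; along the recursion the first square vanishes. -/
lemma energy_sub (T : E →ₗ[ℝ] E) (hT : ∀ x y, ⟪T x, y⟫ = -⟪x, T y⟫) (b ρ : ℝ) (x y w : E) :
    energy T b ρ y w - energy T b ρ x y =
      ‖w - ρ • (y + T y) + (b * ρ ^ 2) • T x‖ ^ 2
        - ‖x - ρ • (y - T y) - (b * ρ ^ 2) • T w‖ ^ 2 := by
  have self : ∀ x, ⟪x, T x⟫ = 0 := fun x => by
    have := hT x x
    rw [real_inner_comm] at this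
    linarith
  have c1 := real_inner_comm x y
  have c2 := real_inner_comm y w
  have k1 := real_inner_comm (T x) (T y)
  have k2 := real_inner_comm (T y) (T w)
  have s1 : ⟪x, T y⟫ = -⟪y, T x⟫ := by rw [← hT, real_inner_comm]
  have s2 : ⟪y, T w⟫ = -⟪w, T y⟫ := by rw [← hT, real_inner_comm]
  have s3 : ⟪x, T w⟫ = -⟪w, T x⟫ := by rw [← hT, real_inner_comm]
  have hTT : ∀ x y, ⟪T x, y⟫ = ⟪y, T x⟫ := fun x y => real_inner_comm _ _
  simp only [energy, ← real_inner_self_eq_norm_sq, inner_add_left, inner_add_right,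
    inner_sub_left, inner_sub_right, real_inner_smul_left, real_inner_smul_right, self]
  simp only [hTT x y, hTT x w, hTT y x, hTT y y, hTT y w, hTT w x, hTT w y,
    self, s1, s2, s3, ← c1, ← c2, k1, k2]
  ring

/-- At `ρ = 1` the energy is positive definite. Completing the square in `T x` leaves a form in
`v = y - x` that is coercive because `b` is close to `1/2`; the lower bound on `T` then recovers
`x` from `T x`. -/
lemma energy_one_ge (T : E →ₗ[ℝ] E) (hT : ∀ x y, ⟪T x, y⟫ = -⟪x, T y⟫)
    (hT1 : ∀ x, ‖T x‖ ≤ ‖x‖) {m : ℝ} (hm : 0 < m) (hTm : ∀ x, m * ‖x‖ ≤ ‖T x‖)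
    {b : ℝ} (hb : |2 * b - 1| ≤ 1 / 10) :
    ∃ c > 0, ∀ x y, c * (‖x‖ ^ 2 + ‖y‖ ^ 2) ≤ energy T b 1 x y := by
  obtain ⟨hb1, hb2⟩ := abs_le.1 hb
  have b1 : 9 / 20 ≤ b := by linarith
  have b2 : b ≤ 11 / 20 := by linarith
  have b0 : 0 < b := by linarith
  have key : ∀ x y : E, (1 / 20) * ‖y - x‖ ^ 2 +
      (2 * (1 - b) * b) * ‖T x - (1 / (2 * b)) • ((y - x) - b • T (y - x))‖ ^ 2
      ≤ energy T b 1 x y := by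
    intro x y
    obtain ⟨v, rfl⟩ : ∃ v, y = x + v := ⟨y - x, by abel⟩
    have self : ∀ x, ⟪x, T x⟫ = 0 := fun x => by
      have := hT x x
      rw [real_inner_comm] at this
      linarith
    have hv : ‖T v‖ ^ 2 ≤ ‖v‖ ^ 2 := by gcongr; exact hT1 v
    -- Complete the square in `T x`.
    have id : energy T b 1 x (x + v) =
        (2 * (1 - b) * b) * ‖T x - (1 / (2 * b)) • (v - b • T v)‖ ^ 2
        + ((3 * b - 1) * ‖v‖ ^ 2 - b ^ 2 * (1 + b) * ‖T v‖ ^ 2) / (2 * b) := by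
      have hTT : ∀ x y, ⟪T x, y⟫ = ⟪y, T x⟫ := fun x y => real_inner_comm _ _
      have c1 := real_inner_comm x v
      have k1 := real_inner_comm (T x) (T v)
      simp only [energy, ← real_inner_self_eq_norm_sq, inner_add_left, inner_add_right, map_add,
        inner_sub_left, inner_sub_right, real_inner_smul_left, real_inner_smul_right, self]
      simp only [hTT x v, hTT v v, self, ← c1, k1]
      field_simp
      ring
    rw [id, add_sub_cancel_left]
    have : (1 / 20) * ‖v‖ ^ 2 ≤
        ((3 * b - 1) * ‖v‖ ^ 2 - b ^ 2 * (1 + b) * ‖T v‖ ^ 2) / (2 * b) := by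
      rw [le_div_iff₀ (by positivity)]
      have h1 : b ^ 2 * (1 + b) * ‖T v‖ ^ 2 ≤ b ^ 2 * (1 + b) * ‖v‖ ^ 2 := by gcongr
      have h2 : 0 ≤ 3 * b - 1 - b ^ 2 * (1 + b) - b / 10 := by
        nlinarith [mul_nonneg (sub_nonneg.2 b1) (sub_nonneg.2 b2),
          mul_nonneg (mul_nonneg (sub_nonneg.2 b1) (sub_nonneg.2 b2)) b0.le]
      nlinarith [mul_nonneg h2 (sq_nonneg ‖v‖)]
    linarith
  refine ⟨1 / (20 * (24 / m ^ 2 + 2)), by positivity,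
    fun x y => le_trans ?_ (key x y)⟩
  set v := y - x with hv
  set g := T x - (1 / (2 * b)) • (v - b • T v) with hg
  have hy : y = x + v := by rw [hv]; abel
  have e1 : m * ‖x‖ ≤ ‖g‖ + 2 * ‖v‖ := by
    have h1 : T x = g + (1 / (2 * b)) • (v - b • T v) := by rw [hg]; abel
    have h2 : ‖v - b • T v‖ ≤ ‖v‖ + b * ‖v‖ := by
      refine (norm_sub_le _ _).trans ?_
      rw [norm_smul, Real.norm_of_nonneg b0.le]
      gcongr
      exact hT1 v
    have h3 : ‖(1 / (2 * b)) • (v - b • T v)‖ ≤ 2 * ‖v‖ := by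
      rw [norm_smul, Real.norm_of_nonneg (by positivity), one_div, inv_mul_le_iff₀ (by positivity)]
      nlinarith [norm_nonneg v]
    calc m * ‖x‖ ≤ ‖T x‖ := hTm x
      _ ≤ _ := by rw [h1]; exact (norm_add_le _ _).trans (by gcongr)
  have e2 : ‖x‖ ^ 2 ≤ 8 / m ^ 2 * (‖v‖ ^ 2 + ‖g‖ ^ 2) := by
    rw [div_mul_eq_mul_div, le_div_iff₀ (by positivity)]
    have h1 : (m * ‖x‖) ^ 2 ≤ (‖g‖ + 2 * ‖v‖) ^ 2 := by gcongr
    nlinarith [sq_nonneg (2 * ‖g‖ - ‖v‖), sq_nonneg ‖g‖, sq_nonneg (‖g‖ - 2 * ‖v‖)]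
  have e3 : ‖y‖ ^ 2 ≤ 2 * ‖x‖ ^ 2 + 2 * ‖v‖ ^ 2 := by
    have h1 : ‖y‖ ^ 2 ≤ (‖x‖ + ‖v‖) ^ 2 := by rw [hy]; gcongr; exact norm_add_le _ _
    nlinarith [sq_nonneg (‖x‖ - ‖v‖)]
  have e4 : 1 / 20 * ‖g‖ ^ 2 ≤ 2 * (1 - b) * b * ‖g‖ ^ 2 := by
    gcongr
    nlinarith
  have e5 : ‖x‖ ^ 2 + ‖y‖ ^ 2 ≤ (24 / m ^ 2 + 2) * (‖v‖ ^ 2 + ‖g‖ ^ 2) := by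
    have : 24 / m ^ 2 = 3 * (8 / m ^ 2) := by ring
    rw [this]
    nlinarith [sq_nonneg ‖g‖]
  rw [one_div, inv_mul_le_iff₀ (by positivity)]
  calc _ ≤ _ := e5
    _ = 20 * (24 / m ^ 2 + 2) * (1 / 20 * ‖v‖ ^ 2 + 1 / 20 * ‖g‖ ^ 2) := by ring
    _ ≤ _ := by gcongr

/-- Positivity of the energy survives a small increase of `ρ` beyond `1`: for `e ≤ 1` the coefficients
move by at most `15e`, `e`, `8e` and `7e`, which costs at most `31 e (‖x‖² + ‖y‖²)`. -/
lemma energy_ge (T : E →ₗ[ℝ] E) (hT1 : ∀ x, ‖T x‖ ≤ ‖x‖) {b c : ℝ} (hb0 : 0 ≤ b) (hb1 : b ≤ 1)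
    {e : ℝ} (he0 : 0 ≤ e) (he1 : e ≤ 1) (he : 62 * e ≤ c)
    (x y : E) (h : c * (‖x‖ ^ 2 + ‖y‖ ^ 2) ≤ energy T b 1 x y) :
    c / 2 * (‖x‖ ^ 2 + ‖y‖ ^ 2) ≤ energy T b (1 + e) x y := by
  have hx : ‖T x‖ ^ 2 ≤ ‖x‖ ^ 2 := by gcongr; exact hT1 x
  have hy : ‖T y‖ ^ 2 ≤ ‖y‖ ^ 2 := by gcongr; exact hT1 y
  have cs : ∀ u v : E, 2 * |⟪u, v⟫| ≤ ‖v‖ ^ 2 + ‖u‖ ^ 2 := fun u v => by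
    nlinarith [abs_real_inner_le_norm u v, sq_nonneg (‖u‖ - ‖v‖)]
  set N := ‖x‖ ^ 2 + ‖y‖ ^ 2 with hN
  have hN0 : 0 ≤ N := by positivity
  have P := cs y x
  have Q := cs y (T x)
  have R := cs (T y) (T x)
  have r4 : b ^ 2 * ((1 + e) ^ 4 - 1) ≤ 15 * e := by
    have : (1 + e) ^ 4 - 1 ≤ 15 * e := by
      nlinarith [mul_nonneg he0 (sub_nonneg.2 he1),
        mul_nonneg (mul_nonneg he0 he0) (sub_nonneg.2 he1),
        mul_nonneg (mul_nonneg (mul_nonneg he0 he0) he0) (sub_nonneg.2 he1)]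
    have h1 : b ^ 2 ≤ 1 := pow_le_one₀ hb0 hb1
    nlinarith [sq_nonneg b, mul_le_mul_of_nonneg_left this (sq_nonneg b)]
  have r3 : b * ((1 + e) ^ 3 - 1) ≤ 7 * e := by
    have : (1 + e) ^ 3 - 1 ≤ 7 * e := by
      nlinarith [mul_nonneg he0 (sub_nonneg.2 he1), mul_nonneg (mul_nonneg he0 he0) (sub_nonneg.2 he1)]
    nlinarith
  have r3' : 0 ≤ b * ((1 + e) ^ 3 - 1) := by
    have : (1 + e) ^ 3 - 1 = e * (3 + 3 * e + e ^ 2) := by ring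
    rw [this]; positivity
  have prod : ∀ k K p : ℝ, |k| ≤ K → 2 * |p| ≤ N → 2 * (k * p) ≤ K * N := fun k K p hk hp => by
    have := abs_mul k p
    have h2 := le_abs_self (k * p)
    nlinarith [abs_nonneg k, abs_nonneg p, mul_le_mul hk hp (by positivity) ((abs_nonneg k).trans hk)]
  have t1 : b ^ 2 * ((1 + e) ^ 4 - 1) * (‖T x‖ ^ 2 + ‖T y‖ ^ 2) ≤ 15 * e * N := by
    refine mul_le_mul r4 (by linarith) (by positivity) (by positivity)
  have t2 := prod e e ⟪y, x⟫ (by rw [abs_of_nonneg he0]) (by linarith)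
  have t3 := prod (e - b * ((1 + e) ^ 3 - 1)) (8 * e) ⟪y, T x⟫
    (by rw [abs_le]; constructor <;> linarith) (by linarith)
  have t4 := prod (-(b * ((1 + e) ^ 3 - 1))) (7 * e) ⟪T y, T x⟫
    (by rw [abs_neg, abs_of_nonneg r3']; exact r3) (by linarith)
  have id : energy T b (1 + e) x y = energy T b 1 x y
      - b ^ 2 * ((1 + e) ^ 4 - 1) * (‖T x‖ ^ 2 + ‖T y‖ ^ 2) - 2 * (e * ⟪y, x⟫)
      - 2 * ((e - b * ((1 + e) ^ 3 - 1)) * ⟪y, T x⟫)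
      - 2 * (-(b * ((1 + e) ^ 3 - 1)) * ⟪T y, T x⟫) := by
    unfold energy; ring
  rw [id]
  nlinarith [mul_le_mul_of_nonneg_right he hN0]

/-- Linear convergence of the abstract recursion: `ρ ^ t • z t` solves the scaled recursion, so its
energy is nonincreasing, and positivity of the energy bounds it; hence `‖z t‖² = O(ρ ^ (-2t))`. -/
lemma linear_rate (T : E →ₗ[ℝ] E) (hT : ∀ x y, ⟪T x, y⟫ = -⟪x, T y⟫)
    (hT1 : ∀ x, ‖T x‖ ≤ ‖x‖) {m : ℝ} (hm : 0 < m) (hTm : ∀ x, m * ‖x‖ ≤ ‖T x‖)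
    {b : ℝ} (hb : |2 * b - 1| ≤ 1 / 10) (z : ℕ → E)
    (hz : ∀ t, z (t + 2) = z (t + 1) + T (z (t + 1)) - b • T (z t)) :
    ∃ C > 0, ∃ r : ℝ, 0 ≤ r ∧ r < 1 ∧ ∀ t, ‖z t‖ ^ 2 ≤ C * r ^ t := by
  obtain ⟨c, hc, hV⟩ := energy_one_ge T hT hT1 hm hTm hb
  obtain ⟨hb1, hb2⟩ := abs_le.1 hb
  obtain ⟨e, he0, he1, he⟩ : ∃ e : ℝ, 0 < e ∧ e ≤ 1 ∧ 62 * e ≤ c :=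
    ⟨min 1 (c / 62), by positivity, min_le_left _ _, by
      have := min_le_right 1 (c / 62); linarith⟩
  set ρ := 1 + e with hρ
  have hρ0 : 0 < ρ := by positivity
  have hpos := fun x y => energy_ge T hT1 (b := b) (by linarith) (by linarith) he0.le he1 he x y (hV x y)
  have hanti : Antitone fun t => energy T b ρ (ρ ^ t • z t) (ρ ^ (t + 1) • z (t + 1)) := by
    refine antitone_nat_of_succ_le fun t => ?_
    have h := energy_sub T hT b ρ (ρ ^ t • z t) (ρ ^ (t + 1) • z (t + 1)) (ρ ^ (t + 2) • z (t + 2))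
    have h0 : ρ ^ (t + 2) • z (t + 2) - ρ • (ρ ^ (t + 1) • z (t + 1) + T (ρ ^ (t + 1) • z (t + 1)))
        + (b * ρ ^ 2) • T (ρ ^ t • z t) = 0 := by
      rw [hz, map_smul, map_smul]
      module
    rw [h0, norm_zero] at h
    have := sq_nonneg ‖ρ ^ t • z t - ρ • (ρ ^ (t + 1) • z (t + 1) - T (ρ ^ (t + 1) • z (t + 1)))
      - (b * ρ ^ 2) • T (ρ ^ (t + 2) • z (t + 2))‖
    show energy T b ρ (ρ ^ (t + 1) • z (t + 1)) (ρ ^ (t + 2) • z (t + 2)) ≤ _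
    linarith
  set V0 := energy T b ρ (ρ ^ 0 • z 0) (ρ ^ (0 + 1) • z (0 + 1)) with hV0
  have hV00 : 0 ≤ V0 := le_trans (by positivity) (hpos _ _)
  refine ⟨2 * V0 / c + 1, by positivity, (ρ ^ 2)⁻¹, by positivity,
    inv_lt_one_of_one_lt₀ (one_lt_pow₀ (by linarith) two_ne_zero), fun t => ?_⟩
  have h1 := (hpos (ρ ^ t • z t) (ρ ^ (t + 1) • z (t + 1))).trans (hanti (Nat.zero_le t))
  have h2 : c / 2 * (ρ ^ t * ‖z t‖) ^ 2 ≤ V0 := by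
    refine le_trans ?_ h1
    rw [norm_smul (ρ ^ t), Real.norm_of_nonneg (by positivity)]
    gcongr
    exact le_add_of_nonneg_right (by positivity)
  have h3 : ‖z t‖ ^ 2 * (ρ ^ 2) ^ t ≤ 2 * V0 / c + 1 := by
    have : ‖z t‖ ^ 2 * (ρ ^ 2) ^ t = (ρ ^ t * ‖z t‖) ^ 2 := by
      rw [mul_pow, ← pow_mul, ← pow_mul, mul_comm 2 t, mul_comm]
    rw [this]
    have : (ρ ^ t * ‖z t‖) ^ 2 ≤ 2 * V0 / c := by
      rw [le_div_iff₀ hc]; linarith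
    linarith
  rw [inv_pow, ← div_eq_mul_inv, le_div_iff₀ (by positivity)]
  exact h3
end

/-! ### Extreme eigenvalues and the game operator -/

lemma finite_eigenvalues {d : ℕ} (S : Matrix (Fin d) (Fin d) ℝ) :
    {μ : ℝ | ∃ v : Fin d → ℝ, v ≠ 0 ∧ S.mulVec v = μ • v}.Finite := by
  refine (Module.End.finite_hasEigenvalue (Matrix.toLin' S)).subset ?_
  rintro μ ⟨v, hv, h⟩
  exact Module.End.hasEigenvalue_of_hasEigenvector
    ⟨Module.End.mem_eigenspace_iff.2 (by simpa using h), hv⟩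

lemma lamMin_le_lamMax {d : ℕ} (S : Matrix (Fin d) (Fin d) ℝ) (h : lamMax S ≠ 0) :
    lamMin S ≤ lamMax S := by
  refine csInf_le_csSup ?_ (finite_eigenvalues S).bddBelow (finite_eigenvalues S).bddAbove
  rw [Set.nonempty_iff_ne_empty]
  intro h0
  -- An empty eigenvalue set (`d = 0`) would make the supremum the junk value `0`.
  exact h (by rw [lamMax, h0, Real.sSup_empty])

lemma dotProduct_mulVec_le_lamMax {d : ℕ} (S : Matrix (Fin d) (Fin d) ℝ) (hS : S.IsHermitian)
    (v : Fin d → ℝ) : v ⬝ᵥ S *ᵥ v ≤ lamMax S * (v ⬝ᵥ v) := by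
  have hle : ∀ i, hS.eigenvalues i ≤ lamMax S := fun i =>
    le_csSup (finite_eigenvalues S).bddAbove
      ⟨(hS.eigenvectorBasis i).ofLp, fun h0 =>
        hS.eigenvectorBasis.toBasis.ne_zero i (by
          simpa using (WithLp.ofLp_eq_zero 2).1 h0), hS.mulVec_eigenvectorBasis i⟩
  have hST : Sᵀ = S := by simpa using hS.eq
  have expand : ∀ w : Fin d → ℝ, v ⬝ᵥ w =
      ∑ i, (v ⬝ᵥ (hS.eigenvectorBasis i).ofLp) * ((hS.eigenvectorBasis i).ofLp ⬝ᵥ w) := fun w => by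
    have := hS.eigenvectorBasis.sum_inner_mul_inner (WithLp.toLp 2 v) (WithLp.toLp 2 w)
    simp only [EuclideanSpace.inner_eq_star_dotProduct, star_trivial] at this
    rw [dotProduct_comm v w, ← this]
    simp only [dotProduct_comm]
  rw [expand (S *ᵥ v), expand v, Finset.mul_sum]
  refine Finset.sum_le_sum fun i _ => ?_
  have : (hS.eigenvectorBasis i).ofLp ⬝ᵥ S *ᵥ v
      = hS.eigenvalues i * ((hS.eigenvectorBasis i).ofLp ⬝ᵥ v) := by
    rw [dotProduct_mulVec, ← mulVec_transpose, hST, hS.mulVec_eigenvectorBasis, smul_dotProduct,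
      smul_eq_mul]
  rw [this, dotProduct_comm v]
  nlinarith [mul_le_mul_of_nonneg_right (hle i) (sq_nonneg ((hS.eigenvectorBasis i).ofLp ⬝ᵥ v))]

lemma dotProduct_mulVec_self_le {d : ℕ} (A : Matrix (Fin d) (Fin d) ℝ) (v : Fin d → ℝ) :
    (A *ᵥ v) ⬝ᵥ (A *ᵥ v) ≤ lamMax (Aᵀ * A) * (v ⬝ᵥ v) := by
  have h := dotProduct_mulVec_le_lamMax (Aᵀ * A) (by simpa using isHermitian_conjTranspose_mul_self A) v
  rwa [← mulVec_mulVec, dotProduct_mulVec, vecMul_transpose] at h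

/-- The skew-adjoint operator `K (θ, φ) = (-Aφ, Aᵀθ)` driving the game dynamics, on the joint space
`ℝᵈ × ℝᵈ` realised as `EuclideanSpace` over `Fin d ⊕ Fin d`. -/
noncomputable def gameOp {d : ℕ} (A : Matrix (Fin d) (Fin d) ℝ) :
    EuclideanSpace ℝ (Fin d ⊕ Fin d) →ₗ[ℝ] EuclideanSpace ℝ (Fin d ⊕ Fin d) :=
  Matrix.toEuclideanLin (fromBlocks 0 (-A) Aᵀ 0)

/-- The joint vector `(θ, φ)`. -/
def pair {d : ℕ} (θ φ : Fin d → ℝ) : EuclideanSpace ℝ (Fin d ⊕ Fin d) :=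
  WithLp.toLp 2 (Sum.elim θ φ)

lemma exists_pair {d : ℕ} (x : EuclideanSpace ℝ (Fin d ⊕ Fin d)) : ∃ θ φ, x = pair θ φ :=
  ⟨x.ofLp ∘ Sum.inl, x.ofLp ∘ Sum.inr, by simp [pair]⟩

lemma gameOp_pair {d : ℕ} (A : Matrix (Fin d) (Fin d) ℝ) (θ φ : Fin d → ℝ) :
    gameOp A (pair θ φ) = pair (-(A *ᵥ φ)) (Aᵀ *ᵥ θ) := by
  simp [gameOp, pair, toLpLin_apply, fromBlocks_mulVec, neg_mulVec, Function.comp_def]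

lemma inner_pair {d : ℕ} (θ φ θ' φ' : Fin d → ℝ) :
    inner ℝ (pair θ φ) (pair θ' φ') = θ ⬝ᵥ θ' + φ ⬝ᵥ φ' := by
  rw [dotProduct_comm θ, dotProduct_comm φ]
  simp [pair, EuclideanSpace.inner_eq_star_dotProduct, sumElim_dotProduct_sumElim]

lemma norm_pair_sq {d : ℕ} (θ φ : Fin d → ℝ) :
    ‖pair θ φ‖ ^ 2 = θ ⬝ᵥ θ + φ ⬝ᵥ φ := by
  rw [← real_inner_self_eq_norm_sq, inner_pair]

lemma gameOp_skew {d : ℕ} (A : Matrix (Fin d) (Fin d) ℝ)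
    (x y : EuclideanSpace ℝ (Fin d ⊕ Fin d)) :
    inner ℝ (gameOp A x) y = -inner ℝ x (gameOp A y) := by
  obtain ⟨θ, φ, rfl⟩ := exists_pair x
  obtain ⟨θ', φ', rfl⟩ := exists_pair y
  simp only [gameOp_pair, inner_pair, neg_dotProduct, dotProduct_neg, dotProduct_mulVec,
    mulVec_transpose]
  rw [dotProduct_comm (A *ᵥ φ), dotProduct_mulVec, dotProduct_comm φ]
  ring

lemma gameOp_injective {d : ℕ} (A : Matrix (Fin d) (Fin d) ℝ) (hA : IsUnit A) :
    Function.Injective (gameOp A) := by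
  rw [injective_iff_map_eq_zero]
  intro x hx
  obtain ⟨θ, φ, rfl⟩ := exists_pair x
  have h : ‖gameOp A (pair θ φ)‖ ^ 2 = 0 := by rw [hx]; simp
  have h0 : ∀ v : Fin d → ℝ, 0 ≤ v ⬝ᵥ v := fun v => Finset.sum_nonneg fun i _ => mul_self_nonneg (v i)
  rw [gameOp_pair, norm_pair_sq, neg_dotProduct_neg] at h
  have h1 : A *ᵥ φ = 0 := dotProduct_self_eq_zero.1 (by linarith [h0 (A *ᵥ φ), h0 (Aᵀ *ᵥ θ)])
  have h2 : Aᵀ *ᵥ θ = 0 := dotProduct_self_eq_zero.1 (by linarith [h0 (A *ᵥ φ), h0 (Aᵀ *ᵥ θ)])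
  have h3 : φ = 0 := mulVec_injective_iff_isUnit.2 hA (by simpa using h1)
  have h4 : θ = 0 := mulVec_injective_iff_isUnit.2 ((isUnit_transpose A).2 hA) (by simpa using h2)
  subst h3 h4
  ext i; cases i <;> rfl

lemma norm_smul_gameOp_le {d : ℕ} (A : Matrix (Fin d) (Fin d) ℝ) {s : ℝ}
    (hs : s ^ 2 * lamMax (Aᵀ * A) ≤ 1) (x : EuclideanSpace ℝ (Fin d ⊕ Fin d)) :
    ‖(s • gameOp A) x‖ ≤ ‖x‖ := by
  obtain ⟨θ, φ, rfl⟩ := exists_pair x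
  have h0 : ∀ v : Fin d → ℝ, 0 ≤ v ⬝ᵥ v := fun v => Finset.sum_nonneg fun i _ => mul_self_nonneg (v i)
  have hA : ∀ v, s ^ 2 * ((A *ᵥ v) ⬝ᵥ (A *ᵥ v)) ≤ v ⬝ᵥ v := fun v => by
    nlinarith [mul_le_mul_of_nonneg_left (dotProduct_mulVec_self_le A v) (sq_nonneg s),
      mul_le_mul_of_nonneg_right hs (h0 v)]
  -- The bound passes to `Aᵀ` by expanding `0 ≤ ‖w - s² A Aᵀ w‖²`, as `⟨w, A Aᵀ w⟩ = ‖Aᵀ w‖²`.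
  have hAT : ∀ w, s ^ 2 * ((Aᵀ *ᵥ w) ⬝ᵥ (Aᵀ *ᵥ w)) ≤ w ⬝ᵥ w := fun w => by
    have h1 := hA (Aᵀ *ᵥ w)
    have h2 : w ⬝ᵥ (A *ᵥ Aᵀ *ᵥ w) = (Aᵀ *ᵥ w) ⬝ᵥ (Aᵀ *ᵥ w) := by
      rw [dotProduct_mulVec, ← mulVec_transpose]
    have h3 := h0 (w - s ^ 2 • (A *ᵥ Aᵀ *ᵥ w))
    simp only [sub_dotProduct, dotProduct_sub, smul_dotProduct, dotProduct_smul, smul_eq_mul,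
      dotProduct_comm (A *ᵥ Aᵀ *ᵥ w) w, h2] at h3
    nlinarith [mul_le_mul_of_nonneg_left h1 (sq_nonneg s)]
  rw [← sq_le_sq₀ (norm_nonneg _) (norm_nonneg _), LinearMap.smul_apply, norm_smul, mul_pow,
    Real.norm_eq_abs, sq_abs, gameOp_pair, norm_pair_sq, norm_pair_sq, neg_dotProduct_neg]
  linarith [hA φ, hAT θ]

/-! ### Linear convergence of Grad-SCA -/

/-- Linear convergence of Grad-SCA for the bilinear game `min_θ max_φ θᵀAφ` with a
nonsingular matrix `A`, under the step-size conditions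
`0 < α + β ≤ 1/√(λ_max(AᵀA))` and `|α − β| ≤ √(λ_min(AᵀA))(α+β)²/10`:
`Δ_t = ‖θ_t‖² + ‖φ_t‖² + ‖θ_{t+1}‖² + ‖φ_{t+1}‖²` converges linearly to `0`. -/
theorem stmt_2 {d : ℕ} (A : Matrix (Fin d) (Fin d) ℝ) (hA : IsUnit A)
    (α β : ℝ)
    (hαβ0 : 0 < α + β)
    (hαβ1 : α + β ≤ 1 / Real.sqrt (lamMax (Aᵀ * A)))
    (hαβ2 : |α - β| ≤ Real.sqrt (lamMin (Aᵀ * A)) * (α + β) ^ 2 / 10)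
    (θ φ : ℕ → (Fin d → ℝ)) (θm1 φm1 : Fin d → ℝ)
    (hθ0 : θ 1 = θ 0 - α • A.mulVec (φ 0) - β • (A.mulVec (φ 0) - A.mulVec φm1))
    (hφ0 : φ 1 = φ 0 + α • Aᵀ.mulVec (θ 0) + β • (Aᵀ.mulVec (θ 0) - Aᵀ.mulVec θm1))
    (hθ : ∀ t : ℕ, θ (t + 2) = θ (t + 1) - α • A.mulVec (φ (t + 1))
        - β • (A.mulVec (φ (t + 1)) - A.mulVec (φ t)))
    (hφ : ∀ t : ℕ, φ (t + 2) = φ (t + 1) + α • Aᵀ.mulVec (θ (t + 1))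
        + β • (Aᵀ.mulVec (θ (t + 1)) - Aᵀ.mulVec (θ t))) :
    ∃ C > 0, ∃ r : ℝ, 0 ≤ r ∧ r < 1 ∧ ∀ t : ℕ,
      (∑ i, (θ t i) ^ 2) + (∑ i, (φ t i) ^ 2)
        + (∑ i, (θ (t + 1) i) ^ 2) + (∑ i, (φ (t + 1) i) ^ 2) ≤ C * r ^ t := by
  -- If `λ_max = 0` the upper bound on `α + β` is `1 / 0 = 0`, against `0 < α + β`.
  have hL : 0 < √(lamMax (Aᵀ * A)) := by
    by_contra h
    have h0 : √(lamMax (Aᵀ * A)) = 0 := le_antisymm (not_lt.1 h) (Real.sqrt_nonneg _)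
    rw [h0, div_zero] at hαβ1
    linarith
  have hL0 : 0 < lamMax (Aᵀ * A) := Real.sqrt_pos.1 hL
  have hsL : (α + β) * √(lamMax (Aᵀ * A)) ≤ 1 := (le_div_iff₀ hL).1 hαβ1
  have hs2 : (α + β) ^ 2 * lamMax (Aᵀ * A) ≤ 1 := by
    rw [← Real.sq_sqrt hL0.le, ← mul_pow]
    exact pow_le_one₀ (by positivity) hsL
  have hdiff : |α - β| ≤ (α + β) / 10 := by
    have h1 : √(lamMin (Aᵀ * A)) ≤ √(lamMax (Aᵀ * A)) :=
      Real.sqrt_le_sqrt (lamMin_le_lamMax _ hL0.ne')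
    have h2 : √(lamMin (Aᵀ * A)) * (α + β) ^ 2 ≤ α + β := by
      calc √(lamMin (Aᵀ * A)) * (α + β) ^ 2 ≤ √(lamMax (Aᵀ * A)) * (α + β) ^ 2 := by gcongr
        _ = (α + β) * √(lamMax (Aᵀ * A)) * (α + β) := by ring
        _ ≤ 1 * (α + β) := by gcongr
        _ = α + β := one_mul _
    linarith
  have hb : |2 * (β / (α + β)) - 1| ≤ 1 / 10 := by
    have : 2 * (β / (α + β)) - 1 = -(α - β) / (α + β) := by field_simp; ring
    rw [this, abs_div, abs_neg, abs_of_pos hαβ0, div_le_iff₀ hαβ0]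
    linarith
  obtain ⟨M, hM, hanti⟩ := (gameOp A).exists_antilipschitzWith
    (LinearMap.ker_eq_bot.2 (gameOp_injective A hA))
  have hM0 : (0 : ℝ) < M := by exact_mod_cast hM
  have hlow : ∀ x, (α + β) / M * ‖x‖ ≤ ‖((α + β) • gameOp A) x‖ := fun x => by
    have h := hanti.le_mul_dist x 0
    rw [map_zero, dist_zero_right, dist_zero_right] at h
    rw [LinearMap.smul_apply, norm_smul, Real.norm_of_nonneg hαβ0.le, div_mul_eq_mul_div,
      div_le_iff₀ hM0, mul_assoc, mul_comm _ (M : ℝ)]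
    gcongr
  obtain ⟨C, hC, r, hr0, hr1, h⟩ := linear_rate ((α + β) • gameOp A)
    (fun x y => by
      rw [LinearMap.smul_apply, LinearMap.smul_apply, real_inner_smul_left, real_inner_smul_right,
        gameOp_skew, mul_neg])
    (norm_smul_gameOp_le A hs2) (div_pos hαβ0 hM0) hlow hb (fun t => pair (θ t) (φ t))
    (fun t => by
      simp only [LinearMap.smul_apply, gameOp_pair, smul_smul, div_mul_cancel₀ β hαβ0.ne']
      rw [hθ, hφ]
      ext i
      cases i <;> simp [pair] <;> ring)
  have hΔ : ∀ t, ∑ i, (θ t i) ^ 2 + ∑ i, (φ t i) ^ 2 = ‖pair (θ t) (φ t)‖ ^ 2 := fun t => by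
    rw [norm_pair_sq]
    simp only [dotProduct, sq]
  refine ⟨2 * C, by positivity, r, hr0, hr1, fun t => ?_⟩
  have h1 := h t
  have h2 := h (t + 1)
  have h3 : C * r ^ (t + 1) ≤ C * r ^ t := by
    gcongr 1
    exact pow_le_pow_of_le_one hr0 hr1.le (Nat.le_succ t)
  linarith [hΔ t, hΔ (t + 1)]
end

section
/- Let A ∈ ℝ^{d×p} have rank r ≥ 1 with nonzero singular values σ₁ ≥ ⋯ ≥ σ_r > 0, and let α, β satisfy 0 < α + β ≤ 1/σ₁ and |α − β|/(α+β)² ≤ 0.1 σ_r. Then for any Grad-SCA iterates (θ_t), (φ_t), the quantity Δ^P_t := ‖θ_{t+1} − P_N(θ_0)‖² + ‖θ_t − P_N(θ_0)‖² + ‖φ_{t+1} − P_M(φ_0)‖² + ‖φ_t − P_M(φ_0)‖² converges linearly to 0: there exist C > 0 and ρ ∈ [0,1) with Δ^P_t ≤ C ρ^t for all t. -/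
/-!
Subtracting the projections of the initial point, which the iteration never changes, leaves
sequences orthogonal to `N` and `M`. Expanding `φ` in an orthonormal eigenbasis of `AᵀA`, a
component of eigenvalue `0` vanishes after the subtraction (`dotProduct_const_of_mulVec_eq_zero`).
For an eigenvector `v` of eigenvalue `s ^ 2 ≠ 0`, the complex number
`w t = ⟨Aᵀ θ t, v⟩ / s + i ⟨φ t, v⟩` satisfies
`w (t + 2) = (1 + i a) w (t + 1) - i b w t` with `a = (α + β) s` and `b = β s`. The step-size
conditions give `0 < a ≤ 1` and `|a - 2 b| ≤ 0.1 a ^ 2`, and the Schur–Cohn criterion then puts both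
characteristic roots inside the unit disc (`schurCohn`, `schur_ineq`), so `w` decays geometrically.
The sum of the squared components is `‖φ t - P_M (φ 0)‖²` (`geomDecay_sum_sq`).

The bound for `θ` is the same statement, because `(θ, φ, A) ↦ (φ, -θ, Aᵀ)` is a symmetry of the
iteration and `AAᵀ`, `AᵀA` have the same nonzero eigenvalues.
-/

open Matrix

/-- `f` tends to zero at least geometrically. -/
def GeomDecay (f : ℕ → ℝ) : Prop :=
  ∃ C ρ : ℝ, 0 ≤ C ∧ 0 ≤ ρ ∧ ρ < 1 ∧ ∀ t, |f t| ≤ C * ρ ^ t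

namespace GeomDecay

lemma zero : GeomDecay (fun _ => 0) :=
  ⟨0, 0, le_rfl, le_rfl, one_pos, fun t => by simp⟩

lemma add {f g : ℕ → ℝ} (hf : GeomDecay f) (hg : GeomDecay g) :
    GeomDecay (fun t => f t + g t) := by
  obtain ⟨C, ρ, hC, hρ, hρ1, h⟩ := hf
  obtain ⟨D, τ, hD, hτ, hτ1, k⟩ := hg
  refine ⟨C + D, max ρ τ, by positivity, le_max_of_le_left hρ, max_lt hρ1 hτ1, fun t => ?_⟩
  have e1 : C * ρ ^ t ≤ C * max ρ τ ^ t := by gcongr; exact le_max_left _ _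
  have e2 : D * τ ^ t ≤ D * max ρ τ ^ t := by gcongr; exact le_max_right _ _
  have := abs_add_le (f t) (g t)
  linarith [h t, k t]

lemma sum {ι : Type*} (s : Finset ι) {f : ι → ℕ → ℝ} (h : ∀ i ∈ s, GeomDecay (f i)) :
    GeomDecay (fun t => ∑ i ∈ s, f i t) := by
  classical
  induction s using Finset.induction_on with
  | empty => simpa using zero
  | insert i s hi ih =>
    simp only [Finset.sum_insert hi]
    exact (h i (by simp)).add (ih fun j hj => h j (by simp [hj]))

lemma sq {f : ℕ → ℝ} (hf : GeomDecay f) : GeomDecay (fun t => f t ^ 2) := by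
  obtain ⟨C, ρ, hC, hρ, hρ1, h⟩ := hf
  refine ⟨C ^ 2, ρ ^ 2, by positivity, by positivity, by nlinarith, fun t => ?_⟩
  rw [abs_pow, ← pow_mul, mul_comm 2 t, pow_mul, ← mul_pow]
  exact pow_le_pow_left₀ (abs_nonneg _) (h t) 2

lemma shift {f : ℕ → ℝ} (hf : GeomDecay f) : GeomDecay (fun t => f (t + 1)) := by
  obtain ⟨C, ρ, hC, hρ, hρ1, h⟩ := hf
  refine ⟨C * ρ, ρ, by positivity, hρ, hρ1, fun t => (h (t + 1)).trans_eq (by ring)⟩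

end GeomDecay

/-- Schur–Cohn criterion for `z ^ 2 - (z₁ + z₂) z + z₁ z₂`: with `p` and `q` the sum and product of
the roots, the quantity `(1 - |q|²)² - |p - conj p * q|²` factors as
`(1 - |z₁|²) (1 - |z₂|²) |1 - z₁ conj z₂|²`. -/
lemma schurCohn (z₁ z₂ : ℂ) (hq : Complex.normSq (z₁ * z₂) < 1)
    (h : Complex.normSq ((z₁ + z₂) - (starRingEnd ℂ) (z₁ + z₂) * (z₁ * z₂))
      < (1 - Complex.normSq (z₁ * z₂)) ^ 2) :
    ‖z₁‖ < 1 ∧ ‖z₂‖ < 1 := by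
  have key : (1 - Complex.normSq (z₁ * z₂)) ^ 2
      - Complex.normSq ((z₁ + z₂) - (starRingEnd ℂ) (z₁ + z₂) * (z₁ * z₂))
      = (1 - Complex.normSq z₁) * (1 - Complex.normSq z₂)
        * Complex.normSq (1 - z₁ * (starRingEnd ℂ) z₂) := by
    simp [Complex.normSq_apply]
    ring
  have hpos : 0 < (1 - Complex.normSq z₁) * (1 - Complex.normSq z₂) := by
    refine pos_of_mul_pos_left ?_ (Complex.normSq_nonneg (1 - z₁ * (starRingEnd ℂ) z₂))
    linarith
  rw [Complex.normSq_mul] at hq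
  have n1 := Complex.normSq_nonneg z₁
  have n2 := Complex.normSq_nonneg z₂
  have h12 : Complex.normSq z₁ < 1 ∧ Complex.normSq z₂ < 1 := by
    rcases pos_and_pos_or_neg_and_neg_of_mul_pos hpos with ⟨u, v⟩ | ⟨u, v⟩
    · exact ⟨by linarith, by linarith⟩
    · nlinarith
  rw [Complex.normSq_eq_norm_sq, Complex.normSq_eq_norm_sq] at h12
  exact ⟨by nlinarith [norm_nonneg z₁], by nlinarith [norm_nonneg z₂]⟩

/-- A second-order linear recurrence whose characteristic roots lie in the open unit disc decays
geometrically. -/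
lemma decay_of_roots (z₁ z₂ : ℂ) (hz₁ : ‖z₁‖ < 1) (hz₂ : ‖z₂‖ < 1) (w : ℕ → ℂ)
    (hw : ∀ t, w (t + 2) = (z₁ + z₂) * w (t + 1) - z₁ * z₂ * w t) :
    GeomDecay (fun t => ‖w t‖) := by
  -- Factoring the recurrence, `w (t + 1) - z₂ * w t` is a geometric sequence of ratio `z₁`.
  have hu : ∀ t, w (t + 1) = z₂ * w t + z₁ ^ t * (w 1 - z₂ * w 0) := by
    intro t
    induction t with
    | zero => simp
    | succ t ih => rw [hw t, pow_succ]; linear_combination z₁ * ih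
  -- Any rate strictly above both moduli absorbs the possible double root.
  obtain ⟨ρ, hρm, hρ1⟩ := exists_between (max_lt hz₁ hz₂)
  have h1 : ‖z₁‖ < ρ := (le_max_left _ _).trans_lt hρm
  have h2 : ‖z₂‖ < ρ := (le_max_right _ _).trans_lt hρm
  have hρ0 : 0 ≤ ρ := (norm_nonneg _).trans h1.le
  have hgap : 0 < ρ - ‖z₂‖ := by linarith
  set U := ‖w 1 - z₂ * w 0‖ with hU
  have hU0 : 0 ≤ U := norm_nonneg _
  refine ⟨‖w 0‖ + U / (ρ - ‖z₂‖), ρ, by positivity, hρ0, hρ1, fun t => ?_⟩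
  rw [abs_norm]
  induction t with
  | zero => simpa using by positivity
  | succ t ih =>
    have e1 : ‖w (t + 1)‖ ≤ ‖z₂‖ * ‖w t‖ + ‖z₁‖ ^ t * U := by
      rw [hu t]
      refine (norm_add_le _ _).trans_eq ?_
      rw [norm_mul, norm_mul, norm_pow]
    have e2 : ‖z₁‖ ^ t * U ≤ ρ ^ t * U := by gcongr
    have e3 := mul_le_mul_of_nonneg_left ih (norm_nonneg z₂)
    have e4 : U ≤ (ρ - ‖z₂‖) * (‖w 0‖ + U / (ρ - ‖z₂‖)) := by
      rw [mul_add, mul_div_cancel₀ _ hgap.ne']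
      have : 0 ≤ (ρ - ‖z₂‖) * ‖w 0‖ := by positivity
      linarith
    have e5 := mul_le_mul_of_nonneg_left e4 (pow_nonneg hρ0 t)
    rw [pow_succ]
    linarith

/-- The Schur–Cohn inequality for `z ^ 2 - (1 + i a) z + i b`. -/
lemma schur_ineq {a b : ℝ} (ha : 0 < a) (ha1 : a ≤ 1) (hab : |a - 2 * b| ≤ 0.1 * a ^ 2) :
    b ^ 2 < 1 ∧ (1 - a * b) ^ 2 + (a - b) ^ 2 < (1 - b ^ 2) ^ 2 := by
  obtain ⟨c, rfl⟩ : ∃ c, b = c * a := ⟨b / a, by field_simp⟩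
  have hab' := abs_le.1 hab
  have hc1 : 0.45 ≤ c := by
    by_contra! hc
    nlinarith
  have hc2 : c ≤ 0.55 := by
    by_contra! hc
    nlinarith
  have ha2 : a ^ 2 ≤ 1 := by nlinarith
  have hcc : c ^ 2 ≤ c - 0.2475 := by nlinarith
  have hccc : c ^ 3 ≤ c ^ 2 - 0.2475 * c := by nlinarith
  have hg : 1 - 3 * c + c ^ 2 * (1 + c) * a ^ 2 < 0 := by
    have : c ^ 2 * (1 + c) * a ^ 2 ≤ c ^ 2 * (1 + c) * 1 := by gcongr
    nlinarith
  refine ⟨by nlinarith, ?_⟩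
  have hm : a ^ 2 * (1 - c) * (1 - 3 * c + c ^ 2 * (1 + c) * a ^ 2) < 0 :=
    mul_neg_of_pos_of_neg (mul_pos (by positivity) (by linarith)) hg
  nlinarith

/-- Geometric decay for the scalar (one singular value) game. -/
lemma geomDecay_mode {a b : ℝ} (ha : 0 < a) (ha1 : a ≤ 1) (hab : |a - 2 * b| ≤ 0.1 * a ^ 2)
    (X Y : ℕ → ℝ) (hX : ∀ t, X (t + 2) = X (t + 1) - a * Y (t + 1) + b * Y t)
    (hY : ∀ t, Y (t + 2) = Y (t + 1) + a * X (t + 1) - b * X t) :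
    GeomDecay Y := by
  obtain ⟨hb, hS⟩ := schur_ineq ha ha1 hab
  set P : ℂ := ⟨1, a⟩ with hP
  set Q : ℂ := ⟨0, b⟩ with hQ
  obtain ⟨δ, hδ⟩ := IsAlgClosed.exists_pow_nat_eq (P ^ 2 - 4 * Q) (n := 2) two_pos
  have hsum : (P + δ) / 2 + (P - δ) / 2 = P := by ring
  have hprod : (P + δ) / 2 * ((P - δ) / 2) = Q := by linear_combination (-1 / 4) * hδ
  obtain ⟨h1, h2⟩ := schurCohn ((P + δ) / 2) ((P - δ) / 2)
    (by rw [hprod]; simp [hQ, Complex.normSq_apply]; nlinarith)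
    (by
      rw [hprod, hsum]
      simp [hP, hQ, Complex.normSq_apply]
      nlinarith)
  obtain ⟨C, ρ, hC, hρ, hρ1, h⟩ := decay_of_roots _ _ h1 h2 (fun t => ⟨X t, Y t⟩) (by
    intro t
    rw [hprod, hsum]
    apply Complex.ext
    · simp [hP, hQ, hX]
    · simp [hP, hQ, hY])
  refine ⟨C, ρ, hC, hρ, hρ1, fun t => le_trans ?_ (h t)⟩
  rw [abs_norm]
  exact Complex.abs_im_le_norm ⟨X t, Y t⟩

section Game

variable {d p : ℕ}

/-- Dot products against the kernel of `A` are invariants of the `φ` iteration. -/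
lemma dotProduct_const_of_mulVec_eq_zero (A : Matrix (Fin d) (Fin p) ℝ) (α β : ℝ)
    (θ : ℕ → (Fin d → ℝ)) (φ : ℕ → (Fin p → ℝ)) (θm1 : Fin d → ℝ)
    (hφ0 : φ 1 = φ 0 + α • Aᵀ.mulVec (θ 0) + β • (Aᵀ.mulVec (θ 0) - Aᵀ.mulVec θm1))
    (hφ : ∀ t : ℕ, φ (t + 2) = φ (t + 1) + α • Aᵀ.mulVec (θ (t + 1))
        + β • (Aᵀ.mulVec (θ (t + 1)) - Aᵀ.mulVec (θ t)))
    (v : Fin p → ℝ) (hv : A.mulVec v = 0) (t : ℕ) : φ t ⬝ᵥ v = φ 0 ⬝ᵥ v := by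
  have hA : ∀ x : Fin d → ℝ, Aᵀ.mulVec x ⬝ᵥ v = 0 := by
    intro x
    rw [mulVec_transpose, ← dotProduct_mulVec, hv, dotProduct_zero]
  induction t with
  | zero => rfl
  | succ t ih =>
    rw [← ih]
    cases t with
    | zero => simp [hφ0, add_dotProduct, sub_dotProduct, smul_dotProduct, hA]
    | succ t => simp [hφ t, add_dotProduct, sub_dotProduct, smul_dotProduct, hA]

/-- Geometric decay of `‖φ t - P_M (φ 0)‖²`, where `m = P_M (φ 0)`. Only bounds `lo ^ 2 ≤ μ` and
`μ ≤ hi ^ 2` on the nonzero eigenvalues of `AᵀA` are used, so that the lemma applies to `Aᵀ` too. -/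
lemma geomDecay_sum_sq (A : Matrix (Fin d) (Fin p) ℝ) (lo hi α β : ℝ)
    (hlo : 0 < lo) (hhi : 0 < hi)
    (heig : ∀ (μ : ℝ) (v : Fin p → ℝ), v ≠ 0 → (Aᵀ * A).mulVec v = μ • v → μ ≠ 0 →
      lo ^ 2 ≤ μ ∧ μ ≤ hi ^ 2)
    (h1 : 0 < α + β) (h2 : α + β ≤ 1 / hi) (h3 : |α - β| / (α + β) ^ 2 ≤ 0.1 * lo)
    (θ : ℕ → (Fin d → ℝ)) (φ : ℕ → (Fin p → ℝ)) (θm1 : Fin d → ℝ)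
    (hφ0 : φ 1 = φ 0 + α • Aᵀ.mulVec (θ 0) + β • (Aᵀ.mulVec (θ 0) - Aᵀ.mulVec θm1))
    (hθ : ∀ t : ℕ, θ (t + 2) = θ (t + 1) - α • A.mulVec (φ (t + 1))
        - β • (A.mulVec (φ (t + 1)) - A.mulVec (φ t)))
    (hφ : ∀ t : ℕ, φ (t + 2) = φ (t + 1) + α • Aᵀ.mulVec (θ (t + 1))
        + β • (Aᵀ.mulVec (θ (t + 1)) - Aᵀ.mulVec (θ t)))
    (m : Fin p → ℝ) (hm : A.mulVec m = 0)
    (hm' : ∀ y : Fin p → ℝ, A.mulVec y = 0 → (φ 0 - m) ⬝ᵥ y = 0) :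
    GeomDecay (fun t => ∑ i, (φ t i - m i) ^ 2) := by
  have hH : (Aᵀ * A).IsHermitian := by
    simpa using isHermitian_conjTranspose_mul_self A
  have hnorm : ∀ y : Fin p → ℝ,
      ∑ i, y i ^ 2 = ∑ j, (y ⬝ᵥ (hH.eigenvectorBasis j).ofLp) ^ 2 := by
    intro y
    have := hH.eigenvectorBasis.sum_sq_norm_inner_left (WithLp.toLp 2 y)
    rw [EuclideanSpace.norm_sq_eq] at this
    simpa [EuclideanSpace.inner_eq_star_dotProduct, dotProduct_comm] using this.symm
  suffices h : ∀ j, GeomDecay (fun t => (φ t - m) ⬝ᵥ (hH.eigenvectorBasis j).ofLp) by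
    have := GeomDecay.sum Finset.univ (fun j _ => (h j).sq)
    refine (congrArg GeomDecay (funext fun t => ?_)).mpr this
    exact hnorm (φ t - m)
  intro j
  have hev := hH.mulVec_eigenvectorBasis j
  have hv0 : (hH.eigenvectorBasis j).ofLp ≠ 0 := by
    intro h0
    apply hH.eigenvectorBasis.orthonormal.ne_zero j
    ext i
    simpa using congrFun h0 i
  generalize (hH.eigenvectorBasis j).ofLp = v at hev hv0 ⊢
  generalize hH.eigenvalues j = μ at hev
  by_cases hμ : μ = 0
  · have hAv : A.mulVec v = 0 := by
      rw [hμ, zero_smul, ← mulVec_mulVec] at hev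
      have : A.mulVec v ⬝ᵥ A.mulVec v = 0 := by
        rw [dotProduct_mulVec, ← mulVec_transpose, hev, zero_dotProduct]
      exact dotProduct_self_eq_zero.1 this
    have hc := dotProduct_const_of_mulVec_eq_zero A α β θ φ θm1 hφ0 hφ v hAv
    refine (congrArg GeomDecay (funext fun t => ?_)).mpr GeomDecay.zero
    rw [sub_dotProduct, hc t, ← sub_dotProduct, hm' v hAv]
  · obtain ⟨hl, hu⟩ := heig μ v hv0 hev hμ
    have hμ0 : 0 < μ := lt_of_lt_of_le (by positivity) hl
    obtain ⟨s, hs, rfl⟩ : ∃ s : ℝ, 0 < s ∧ μ = s ^ 2 :=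
      ⟨√μ, Real.sqrt_pos.2 hμ0, (Real.sq_sqrt hμ0.le).symm⟩
    have hls : lo ≤ s := le_of_sq_le_sq hl hs.le
    have hsh : s ≤ hi := le_of_sq_le_sq hu hhi.le
    have hmv : m ⬝ᵥ v = 0 := by
      have : m ⬝ᵥ (s ^ 2 • v) = 0 := by
        rw [← hev, ← mulVec_mulVec, dotProduct_mulVec, vecMul_transpose, hm, zero_dotProduct]
      rw [dotProduct_smul, smul_eq_mul] at this
      exact (mul_eq_zero.1 this).resolve_left hμ
    have hAA : ∀ y : Fin p → ℝ, Aᵀ.mulVec (A.mulVec y) ⬝ᵥ v = s ^ 2 * (y ⬝ᵥ v) := by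
      intro y
      rw [← smul_eq_mul, ← dotProduct_smul, ← hev, ← mulVec_mulVec, mulVec_transpose,
        ← dotProduct_mulVec, dotProduct_mulVec y, vecMul_transpose]
    have key : GeomDecay (fun t => φ t ⬝ᵥ v) := by
      refine geomDecay_mode (a := (α + β) * s) (b := β * s) (by positivity) ?_ ?_
        (fun t => Aᵀ.mulVec (θ t) ⬝ᵥ v / s) _ ?_ ?_
      · rw [le_div_iff₀ hhi] at h2
        exact (mul_le_mul_of_nonneg_left hsh h1.le).trans h2
      · rw [div_le_iff₀ (by positivity)] at h3
        have e : (α + β) * s - 2 * (β * s) = (α - β) * s := by ring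
        rw [e, abs_mul, abs_of_pos hs]
        calc |α - β| * s ≤ 0.1 * lo * (α + β) ^ 2 * s := by gcongr
          _ ≤ 0.1 * s * (α + β) ^ 2 * s := by gcongr
          _ = 0.1 * ((α + β) * s) ^ 2 := by ring
      · intro t
        simp only [hθ t, mulVec_sub, mulVec_smul, sub_dotProduct, smul_dotProduct, hAA,
          smul_eq_mul]
        field_simp
        ring
      · intro t
        simp only [hφ t, add_dotProduct, sub_dotProduct, smul_dotProduct, smul_eq_mul]
        field_simp
        ring
    refine (congrArg GeomDecay (funext fun t => ?_)).mpr key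
    rw [sub_dotProduct, hmv, sub_zero]

end Game

/-- Linear convergence of Grad-SCA for the bilinear game `min_θ max_φ θᵀAφ` with a
general matrix `A` of rank `r ≥ 1` with nonzero singular values
`σ 0 = σ₁ ≥ ⋯ ≥ σ (r-1) = σ_r > 0` (so that the `σ i ^ 2` are exactly the nonzero
eigenvalues of `AᵀA`), under `0 < α + β ≤ 1/σ₁` and `|α − β|/(α+β)² ≤ 0.1 σ_r`:
the quantity
`Δ^P_t = ‖θ_{t+1} − P_N(θ_0)‖² + ‖θ_t − P_N(θ_0)‖² + ‖φ_{t+1} − P_M(φ_0)‖² + ‖φ_t − P_M(φ_0)‖²`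
converges linearly to 0, where `P_N` and `P_M` are the orthogonal projections onto
`N = ker Aᵀ` and `M = ker A`. -/
theorem stmt_4 {d p r : ℕ} (A : Matrix (Fin d) (Fin p) ℝ)
    (hr : 0 < r) (hrank : A.rank = r)
    (σ : Fin r → ℝ)
    (hσpos : ∀ i, 0 < σ i)
    (hσmono : ∀ i j : Fin r, i ≤ j → σ j ≤ σ i)
    (hσeig : ∀ μ : ℝ,
      ((∃ v : Fin p → ℝ, v ≠ 0 ∧ (Aᵀ * A).mulVec v = μ • v) ∧ μ ≠ 0) ↔ ∃ i, μ = σ i ^ 2)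
    (α β : ℝ)
    (h1 : 0 < α + β) (h2 : α + β ≤ 1 / σ ⟨0, hr⟩)
    (h3 : |α - β| / (α + β) ^ 2 ≤ 0.1 * σ ⟨r - 1, Nat.sub_lt hr Nat.one_pos⟩)
    (θ : ℕ → (Fin d → ℝ)) (φ : ℕ → (Fin p → ℝ))
    (θm1 : Fin d → ℝ) (φm1 : Fin p → ℝ)
    (hθ0 : θ 1 = θ 0 - α • A.mulVec (φ 0) - β • (A.mulVec (φ 0) - A.mulVec φm1))
    (hφ0 : φ 1 = φ 0 + α • Aᵀ.mulVec (θ 0) + β • (Aᵀ.mulVec (θ 0) - Aᵀ.mulVec θm1))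
    (hθ : ∀ t : ℕ, θ (t + 2) = θ (t + 1) - α • A.mulVec (φ (t + 1))
        - β • (A.mulVec (φ (t + 1)) - A.mulVec (φ t)))
    (hφ : ∀ t : ℕ, φ (t + 2) = φ (t + 1) + α • Aᵀ.mulVec (θ (t + 1))
        + β • (Aᵀ.mulVec (θ (t + 1)) - Aᵀ.mulVec (θ t)))
    -- `PN` is the orthogonal projection onto `N = {x | Aᵀx = 0}`
    (PN : (Fin d → ℝ) → (Fin d → ℝ))
    (hPN : ∀ x, Aᵀ.mulVec (PN x) = 0 ∧
      ∀ y : Fin d → ℝ, Aᵀ.mulVec y = 0 → ∑ i, (x i - PN x i) * y i = 0)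
    -- `PM` is the orthogonal projection onto `M = {x | Ax = 0}`
    (PM : (Fin p → ℝ) → (Fin p → ℝ))
    (hPM : ∀ x, A.mulVec (PM x) = 0 ∧
      ∀ y : Fin p → ℝ, A.mulVec y = 0 → ∑ i, (x i - PM x i) * y i = 0) :
    ∃ C > 0, ∃ ρ : ℝ, 0 ≤ ρ ∧ ρ < 1 ∧ ∀ t : ℕ,
      (∑ i, (θ (t + 1) i - PN (θ 0) i) ^ 2) + (∑ i, (θ t i - PN (θ 0) i) ^ 2)
        + (∑ i, (φ (t + 1) i - PM (φ 0) i) ^ 2) + (∑ i, (φ t i - PM (φ 0) i) ^ 2)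
        ≤ C * ρ ^ t := by
  have hlo := hσpos ⟨r - 1, Nat.sub_lt hr Nat.one_pos⟩
  have hhi := hσpos ⟨0, hr⟩
  have heig : ∀ (μ : ℝ) (v : Fin p → ℝ), v ≠ 0 → (Aᵀ * A).mulVec v = μ • v → μ ≠ 0 →
      σ ⟨r - 1, Nat.sub_lt hr Nat.one_pos⟩ ^ 2 ≤ μ ∧ μ ≤ σ ⟨0, hr⟩ ^ 2 := by
    intro μ v hv hev hμ
    obtain ⟨i, rfl⟩ := (hσeig μ).1 ⟨⟨v, hv, hev⟩, hμ⟩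
    have e1 := hσmono i ⟨r - 1, Nat.sub_lt hr Nat.one_pos⟩ (Fin.mk_le_mk.2 (by omega))
    have e2 := hσmono ⟨0, hr⟩ i (Fin.mk_le_mk.2 (by omega))
    exact ⟨pow_le_pow_left₀ hlo.le e1 2, pow_le_pow_left₀ (hσpos i).le e2 2⟩
  have heigT : ∀ (μ : ℝ) (v : Fin d → ℝ), v ≠ 0 → (Aᵀᵀ * Aᵀ).mulVec v = μ • v → μ ≠ 0 →
      σ ⟨r - 1, Nat.sub_lt hr Nat.one_pos⟩ ^ 2 ≤ μ ∧ μ ≤ σ ⟨0, hr⟩ ^ 2 := by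
    intro μ v hv hev hμ
    rw [transpose_transpose, ← mulVec_mulVec] at hev
    refine heig μ (Aᵀ.mulVec v) ?_ ?_ hμ
    · intro h0
      rw [h0, mulVec_zero] at hev
      exact (smul_ne_zero hμ hv) hev.symm
    · rw [← mulVec_mulVec, hev, mulVec_smul]
  have D1 := geomDecay_sum_sq A _ _ α β hlo hhi heig h1 h2 h3 θ φ θm1 hφ0 hθ hφ
    (PM (φ 0)) (hPM _).1 (hPM _).2
  have D2 := geomDecay_sum_sq Aᵀ _ _ α β hlo hhi heigT h1 h2 h3 φ (fun t => -θ t) φm1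
    (by rw [hθ0, transpose_transpose]; module)
    (fun t => by simp only [hφ t, mulVec_neg]; module)
    (fun t => by simp only [hθ t, transpose_transpose]; module)
    (-PN (θ 0)) (by rw [mulVec_neg, (hPN _).1, neg_zero])
    (fun y hy => by
      have := (hPN (θ 0)).2 y hy
      change (θ 0 - PN (θ 0)) ⬝ᵥ y = 0 at this
      rw [← neg_sub', neg_dotProduct, this, neg_zero])
  have D2' : GeomDecay (fun t => ∑ i, (θ t i - PN (θ 0) i) ^ 2) := by
    refine (congrArg GeomDecay (funext fun t => Finset.sum_congr rfl fun i _ => ?_)).mpr D2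
    simp only [Pi.neg_apply]
    ring
  obtain ⟨C, ρ, hC, hρ, hρ1, h⟩ := ((D2'.shift.add D2').add D1.shift).add D1
  refine ⟨C + 1, by positivity, ρ, hρ, hρ1, fun t => ?_⟩
  refine (le_abs_self _).trans ((h t).trans ?_)
  gcongr
  linarith
end

section
/- Let s ∈ (0,1] and t ∈ ℝ, and set b := (s − t)/2. Then every complex root λ of the quartic polynomial λ²(1−λ)² + (sλ − b)² satisfies |Re λ| ≤ R(s,t) and |Im λ| ≤ I(s,t), where R(s,t) = (1/2)√((√((1−s²)² + 4t²) + 1 − s²)/2) + 1/2 and I(s,t) = (1/2)√((√((1−s²)² + 4t²) − 1 + s²)/2) + s/2. -/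
/-!
The quartic is a sum of two squares, so over `ℂ` it factors as
`(λ² - λ + i(sλ - b)) (λ² - λ - i(sλ - b))`. Completing the square, a root of the factor with
sign `ε = ±1` satisfies `w² = 1 - s² - 2εit` for `w = 2λ - 1 + εis`. The real and imaginary parts
of a complex square root are determined up to sign by `Re (w²)` and `|w|²`
(`abs_re_im_of_sq`), and `λ = (1 - εis + w) / 2` then gives both bounds by the triangle inequality.
-/

/-- If `(x + iy)² = 1 - s² - 2it` then `x² + y² = √((1 - s²)² + 4t²)`, which together with
`x² - y² = 1 - s²` determines `|x|` and `|y|`. -/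
lemma abs_re_im_of_sq (s t x y : ℝ) (h1 : x ^ 2 - y ^ 2 = 1 - s ^ 2) (h2 : x * y = -t) :
    |x| = Real.sqrt ((Real.sqrt ((1 - s ^ 2) ^ 2 + 4 * t ^ 2) + 1 - s ^ 2) / 2) ∧
    |y| = Real.sqrt ((Real.sqrt ((1 - s ^ 2) ^ 2 + 4 * t ^ 2) - 1 + s ^ 2) / 2) := by
  have hS : Real.sqrt ((1 - s ^ 2) ^ 2 + 4 * t ^ 2) = x ^ 2 + y ^ 2 := by
    rw [← Real.sqrt_sq (show 0 ≤ x ^ 2 + y ^ 2 by positivity), ← h1,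
      show t = -(x * y) by linarith]
    congr 1
    ring
  rw [hS, ← Real.sqrt_sq_eq_abs, ← Real.sqrt_sq_eq_abs]
  constructor <;> congr 1 <;> linarith

/-- The bounds for a root `λ` of the factor `λ² - λ + εi(sλ - b)`, where `ε = ±1`. -/
lemma bounds_of_factor (s t e : ℝ) (hs0 : 0 < s) (he : e = 1 ∨ e = -1) (lam : ℂ)
    (h : lam ^ 2 - lam + e * Complex.I * ((s : ℂ) * lam - (((s - t) / 2 : ℝ) : ℂ)) = 0) :
    |lam.re| ≤ (1 / 2) * Real.sqrt ((Real.sqrt ((1 - s ^ 2) ^ 2 + 4 * t ^ 2)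
        + 1 - s ^ 2) / 2) + 1 / 2 ∧
    |lam.im| ≤ (1 / 2) * Real.sqrt ((Real.sqrt ((1 - s ^ 2) ^ 2 + 4 * t ^ 2)
        - 1 + s ^ 2) / 2) + s / 2 := by
  have hre := congrArg Complex.re h
  have him := congrArg Complex.im h
  simp [pow_two] at hre him
  have he2 : e ^ 2 = 1 := by rcases he with rfl | rfl <;> norm_num
  have key := abs_re_im_of_sq s (e * t) (2 * lam.re - 1) (2 * lam.im + e * s)
    (by linear_combination 4 * hre - s ^ 2 * he2) (by linear_combination 2 * him)
  rw [show (e * t) ^ 2 = t ^ 2 by rw [mul_pow, he2, one_mul]] at key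
  rw [← key.1, ← key.2]
  have hx := abs_le.1 (le_refl |2 * lam.re - 1|)
  have hy := abs_le.1 (le_refl |2 * lam.im + e * s|)
  refine ⟨abs_le.2 ⟨by linarith, by linarith⟩, ?_⟩
  rcases he with rfl | rfl <;> exact abs_le.2 ⟨by linarith, by linarith⟩

/-- Bounds on the real and imaginary parts of the roots of the quartic
`λ²(1−λ)² + (sλ − b)²` with `b = (s − t)/2`, for `s ∈ (0,1]` and `t ∈ ℝ`. -/
theorem stmt_8 (s t : ℝ) (hs0 : 0 < s) (hs1 : s ≤ 1) (lam : ℂ)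
    (hroot : lam ^ 2 * (1 - lam) ^ 2
      + ((s : ℂ) * lam - (((s - t) / 2 : ℝ) : ℂ)) ^ 2 = 0) :
    |lam.re| ≤ (1 / 2) * Real.sqrt ((Real.sqrt ((1 - s ^ 2) ^ 2 + 4 * t ^ 2)
        + 1 - s ^ 2) / 2) + 1 / 2 ∧
    |lam.im| ≤ (1 / 2) * Real.sqrt ((Real.sqrt ((1 - s ^ 2) ^ 2 + 4 * t ^ 2)
        - 1 + s ^ 2) / 2) + s / 2 := by
  have hfac : (lam ^ 2 - lam
        + (1 : ℝ) * Complex.I * ((s : ℂ) * lam - (((s - t) / 2 : ℝ) : ℂ))) *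
      (lam ^ 2 - lam
        + (-1 : ℝ) * Complex.I * ((s : ℂ) * lam - (((s - t) / 2 : ℝ) : ℂ))) = 0 := by
    rw [← hroot]
    push_cast
    linear_combination (-((s : ℂ) * lam - (s - t) / 2) ^ 2) * Complex.I_sq
  rcases mul_eq_zero.1 hfac with h | h
  · exact bounds_of_factor s t 1 hs0 (Or.inl rfl) lam h
  · exact bounds_of_factor s t (-1) hs0 (Or.inr rfl) lam h
end

section
/- For all real s and t with 0 < s ≤ 1/√2 and |t| ≤ s²/10, the inequality ((1/2)√(1 − s² + t²/(1−s²)) + 1/2)² + (s/2 + |t|/(2√(1−s²)))² ≤ 1 holds. -/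
/-!
Put `p = √(1 - s²)` and `q = √(1 - s² + t²/p²)`. Expanding the squares and substituting
`q² = 1 - s² + t²/p²`, the terms `±s²` cancel, and the claim is equivalent to
`q + t²/p² + s|t|/p ≤ 1`. Since `s² ≤ 1/2` gives `s ≤ p` and `1/p² ≤ 2`, the three terms are at
most `1 - 99s²/200`, `s²/100` and `s²/10` respectively.
-/


/-- The key inequality in the Grad-SCA spectral radius bound in the regime
`0 < s ≤ 1/√2`, `|t| ≤ s²/10`:
`((1/2)√(1 − s² + t²/(1−s²)) + 1/2)² + (s/2 + |t|/(2√(1−s²)))² ≤ 1`. -/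
theorem stmt_10 (s t : ℝ) (hs0 : 0 < s) (hs1 : s ≤ 1 / Real.sqrt 2)
    (ht : |t| ≤ s ^ 2 / 10) :
    ((1 / 2) * Real.sqrt (1 - s ^ 2 + t ^ 2 / (1 - s ^ 2)) + 1 / 2) ^ 2
      + (s / 2 + |t| / (2 * Real.sqrt (1 - s ^ 2))) ^ 2 ≤ 1 := by
  have hu : s ^ 2 ≤ 1 / 2 := by
    calc s ^ 2 ≤ (1 / Real.sqrt 2) ^ 2 := by gcongr
      _ = 1 / 2 := by rw [div_pow, Real.sq_sqrt (by norm_num)]; norm_num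
  have hD : 0 < 1 - s ^ 2 := by linarith
  have hp0 : 0 < Real.sqrt (1 - s ^ 2) := Real.sqrt_pos.mpr hD
  have hp2 : Real.sqrt (1 - s ^ 2) ^ 2 = 1 - s ^ 2 := Real.sq_sqrt hD.le
  have hsp : s ≤ Real.sqrt (1 - s ^ 2) := Real.le_sqrt_of_sq_le (by linarith)
  have hX0 : 0 ≤ t ^ 2 / (1 - s ^ 2) := by positivity
  have hX : t ^ 2 / (1 - s ^ 2) ≤ s ^ 2 / 100 := by
    rw [div_le_iff₀ hD, ← sq_abs t]
    have h1 : |t| ^ 2 ≤ (s ^ 2 / 10) ^ 2 := by gcongr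
    nlinarith [sq_nonneg s]
  have hq2 : Real.sqrt (1 - s ^ 2 + t ^ 2 / (1 - s ^ 2)) ^ 2
      = 1 - s ^ 2 + t ^ 2 / (1 - s ^ 2) := Real.sq_sqrt (by linarith)
  -- `q² ≤ 1 - 99s²/100`, and `√(1 - x) ≤ 1 - x/2`.
  have hq : Real.sqrt (1 - s ^ 2 + t ^ 2 / (1 - s ^ 2)) ≤ 1 - 99 / 200 * s ^ 2 := by
    apply Real.sqrt_le_iff.mpr
    constructor
    · linarith
    · nlinarith [sq_nonneg (s ^ 2)]
  have hY : s * (|t| / Real.sqrt (1 - s ^ 2)) ≤ s ^ 2 / 10 := by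
    rw [← mul_div_assoc, div_le_iff₀ hp0, mul_comm s]
    exact mul_le_mul ht hsp hs0.le (by positivity)
  have hZ : (|t| / Real.sqrt (1 - s ^ 2)) ^ 2 = t ^ 2 / (1 - s ^ 2) := by
    rw [div_pow, hp2, sq_abs]
  have hW : |t| / (2 * Real.sqrt (1 - s ^ 2)) = (|t| / Real.sqrt (1 - s ^ 2)) / 2 := by
    rw [div_div, mul_comm]
  rw [hW]
  nlinarith [sq_nonneg s]
end

section
/- For all real s and t with 1/√2 < s ≤ 1 and |t| ≤ s²/10, the inequality R(s,t)² + I(s,t)² < 1 holds, where R(s,t) = (1/2)√((√((1−s²)² + 4t²) + 1 − s²)/2) + 1/2 and I(s,t) = (1/2)√((√((1−s²)² + 4t²) − 1 + s²)/2) + s/2. -/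
/-!
Write `p = 1 - s²`, `D = √(p² + 4t²)`, and let `a`, `b` be the two outer square roots, so that
`a² + b² = D`. Expanding the squares, the claim becomes `2 (a + s b) < 2 + p - D`.
By Cauchy–Schwarz `(2 (a + s b))² ≤ 4 D (1 + s²) = 4 D (2 - p)`, and since `D` is at most
`√(p² + (1 - p)² / 25)`, a convex function of `p ∈ [0, 1/2]`, it lies below the line
`0.2 + 0.62 p`. Inserting this bound leaves a one-variable quadratic inequality in `p`.
-/

/-- The Grad-SCA spectral radius bound in the regime `1/√2 < s ≤ 1`, `|t| ≤ s²/10`: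
`R(s,t)² + I(s,t)² < 1` where
`R(s,t) = (1/2)√((√((1−s²)² + 4t²) + 1 − s²)/2) + 1/2` and
`I(s,t) = (1/2)√((√((1−s²)² + 4t²) − 1 + s²)/2) + s/2`. -/
theorem stmt_11 (s t : ℝ) (hs0 : 1 / Real.sqrt 2 < s) (hs1 : s ≤ 1)
    (ht : |t| ≤ s ^ 2 / 10) :
    ((1 / 2) * Real.sqrt ((Real.sqrt ((1 - s ^ 2) ^ 2 + 4 * t ^ 2) + 1 - s ^ 2) / 2)
        + 1 / 2) ^ 2
      + ((1 / 2) * Real.sqrt ((Real.sqrt ((1 - s ^ 2) ^ 2 + 4 * t ^ 2) - 1 + s ^ 2) / 2)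
        + s / 2) ^ 2 < 1 := by
  have hs : 0 < s := lt_trans (by positivity) hs0
  have hs2 : 1 / 2 < s ^ 2 := by
    have h := pow_lt_pow_left₀ hs0 (by positivity) two_ne_zero
    rwa [div_pow, Real.sq_sqrt (by norm_num), one_pow] at h
  have ht2 : t ^ 2 ≤ (s ^ 2 / 10) ^ 2 := sq_le_sq' (abs_le.mp ht).1 (abs_le.mp ht).2
  obtain ⟨p, hp⟩ : ∃ p, p = 1 - s ^ 2 := ⟨_, rfl⟩
  have hp0 : 0 ≤ p := by nlinarith
  have hp1 : p < 1 / 2 := by linarith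
  have hsp : s ^ 2 = 1 - p := by linarith
  rw [hsp] at ht2
  rw [← hp]
  set D := Real.sqrt (p ^ 2 + 4 * t ^ 2) with hD
  have hpD : p ≤ D := Real.le_sqrt_of_sq_le (by nlinarith [sq_nonneg t])
  -- The line `0.2 + 0.62 p` is just above the chord of the convex bound over `[0, 1/2]`.
  have hDE : D ≤ 0.2 + 0.62 * p := by
    apply Real.sqrt_le_iff.mpr
    constructor
    · positivity
    · nlinarith
  have ha2 : Real.sqrt ((D + 1 - s ^ 2) / 2) ^ 2 = (D + p) / 2 := by
    rw [Real.sq_sqrt (by linarith)]; linarith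
  have hb2 : Real.sqrt ((D - 1 + s ^ 2) / 2) ^ 2 = (D - p) / 2 := by
    rw [Real.sq_sqrt (by linarith)]; linarith
  set a := Real.sqrt ((D + 1 - s ^ 2) / 2)
  set b := Real.sqrt ((D - 1 + s ^ 2) / 2)
  have hCS : (2 * (a + s * b)) ^ 2 ≤ 4 * D * (2 - p) := by
    have h : (2 * (a + s * b)) ^ 2 + 4 * (s * a - b) ^ 2 = 4 * (a ^ 2 + b ^ 2) * (1 + s ^ 2) := by
      ring
    rw [ha2, hb2, hsp] at h
    nlinarith [sq_nonneg (s * a - b)]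
  have hquad : 4 * D * (2 - p) < (2 + p - D) ^ 2 := by
    have h1 : 4 * D * (2 - p) ≤ 4 * (0.2 + 0.62 * p) * (2 - p) := by
      gcongr
      linarith
    have h2 : (1.8 + 0.38 * p) ^ 2 ≤ (2 + p - D) ^ 2 := by
      apply pow_le_pow_left₀ (by positivity)
      linarith
    nlinarith
  have key : 2 * (a + s * b) < 2 + p - D :=
    lt_of_pow_lt_pow_left₀ 2 (by linarith) (lt_of_le_of_lt hCS hquad)
  nlinarith
end

section
/- For every real a with 0 < a ≤ 1/√2, every real root λ of the quadratic λ² − (1 − 2a²)λ − a² = 0 satisfies |λ| < 1 − a² + a⁴. (The two roots are (1 − 2a² ± √(1 + 4a⁴))/2.) -/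
/-!
Put `x = a²`, so `0 < x ≤ 1/2`, and let `p t = t² − (1 − 2x)t − x` and `B = 1 − x + x²`.
Then `p B = x⁴ > 0` and `p (−B) = (1 − x)⁴ + (1 − 2x) > 0`, while `p` is increasing on `[B, ∞)` and
decreasing on `(−∞, −B]`; hence every real root of `p` lies strictly between `−B` and `B`.
-/

/-- For `0 < a ≤ 1/√2`, every real root `λ` of `λ² − (1 − 2a²)λ − a² = 0`
satisfies `|λ| < 1 − a² + a⁴`. -/
theorem stmt_12 (a : ℝ) (ha0 : 0 < a) (ha1 : a ≤ 1 / Real.sqrt 2)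
    (lam : ℝ) (hroot : lam ^ 2 - (1 - 2 * a ^ 2) * lam - a ^ 2 = 0) :
    |lam| < 1 - a ^ 2 + a ^ 4 := by
  have hx1 : a ^ 2 ≤ 1 / 2 := by
    have h := pow_le_pow_left₀ ha0.le ha1 2
    rwa [div_pow, Real.sq_sqrt (by norm_num), one_pow] at h
  have hx0 : 0 < a ^ 2 := by positivity
  have h4 : a ^ 4 = (a ^ 2) ^ 2 := by ring
  rw [h4]
  generalize a ^ 2 = x at *
  rw [abs_lt]
  constructor
  · by_contra! h
    -- `p lam - p (-B)` factors as a product of two nonpositive numbers.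
    have h1 : 0 ≤ (-(1 - x + x ^ 2) - lam) * (-(lam - (1 - x + x ^ 2) - 1 + 2 * x)) :=
      mul_nonneg (by linarith) (by nlinarith [sq_nonneg x])
    have h2 : 0 < (1 - x) ^ 4 := pow_pos (by linarith) 4
    linarith
  · by_contra! h
    -- `p lam - p B` factors as a product of two nonnegative numbers.
    have h1 : 0 ≤ (lam - (1 - x + x ^ 2)) * (lam + (1 - x + x ^ 2) - 1 + 2 * x) :=
      mul_nonneg (by linarith) (by nlinarith [sq_nonneg x])
    have h2 : 0 < x ^ 4 := by positivity
    linarith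
end

section
/- Let ξ : ℝⁿ → ℝⁿ be differentiable and suppose its Jacobian J(w) = Dξ(w) is antisymmetric (J(w)ᵀ = −J(w)) at every point w. Then the function H(w) = ‖ξ(w)‖² satisfies ⟨ξ(w), ∇H(w)⟩ = 0 for every w ∈ ℝⁿ; i.e., the derivative of H at w in the direction ξ(w) vanishes. -/
/-!
By the chain rule `DH(w) v = 2 ⟨ξ w, J w v⟩`. At `v = ξ w` this is twice the quadratic form of the
antisymmetric matrix `J w`, which is identically zero.
-/

open Matrix

/-- The quadratic form of an antisymmetric matrix vanishes: the scalar `v ⬝ᵥ A *ᵥ v` equals its own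
transpose `v ⬝ᵥ Aᵀ *ᵥ v`, which is its negative. -/
lemma dotProduct_mulVec_self_eq_zero_of_antisymm {n : ℕ} {A : Matrix (Fin n) (Fin n) ℝ}
    (hA : Aᵀ = -A) (v : Fin n → ℝ) : v ⬝ᵥ A *ᵥ v = 0 := by
  have h : v ⬝ᵥ A *ᵥ v = -(v ⬝ᵥ A *ᵥ v) := by
    calc v ⬝ᵥ A *ᵥ v = v ⬝ᵥ Aᵀ *ᵥ v := by
          rw [dotProduct_mulVec, mulVec_transpose, dotProduct_comm]
      _ = -(v ⬝ᵥ A *ᵥ v) := by rw [hA, neg_mulVec, dotProduct_neg]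
  linarith

/-- If `ξ : ℝⁿ → ℝⁿ` is differentiable with everywhere antisymmetric Jacobian
`J(w)ᵀ = −J(w)`, then the Hamiltonian `H(w) = ‖ξ(w)‖²` satisfies
`⟨ξ(w), ∇H(w)⟩ = 0`, i.e. the derivative of `H` at `w` in the direction `ξ(w)`
vanishes. -/
theorem stmt_14 {n : ℕ} (ξ : (Fin n → ℝ) → (Fin n → ℝ))
    (J : (Fin n → ℝ) → Matrix (Fin n) (Fin n) ℝ)
    (hdiff : ∀ w, HasFDerivAt ξ
      (LinearMap.toContinuousLinearMap (Matrix.mulVecLin (J w))) w)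
    (hanti : ∀ w, (J w)ᵀ = -(J w)) :
    ∀ w : Fin n → ℝ, fderiv ℝ (fun u => ∑ i, (ξ u i) ^ 2) w (ξ w) = 0 := by
  intro w
  -- The chain rule: the derivative of `‖ξ‖²` in the direction `v` is `2 ⟨ξ w, J w v⟩`.
  have hH := HasFDerivAt.fun_sum (u := Finset.univ)
    fun i _ => ((hasFDerivAt_pi'.1 (hdiff w)) i).pow 2
  have h := dotProduct_mulVec_self_eq_zero_of_antisymm (hanti w) (ξ w)
  rw [hH.fderiv]
  simp only [dotProduct] at h
  simp [mul_assoc, ← Finset.mul_sum, h]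
end

section
/- Let ξ : ℝⁿ → ℝⁿ be differentiable with everywhere antisymmetric Jacobian J(w) = Dξ(w) (i.e., J(w)ᵀ = −J(w)), let β ∈ ℝ, and let w : ℝ → ℝⁿ be differentiable. If w'(t) = −ξ(w(t)) + β J(w(t))ᵀ w'(t) for all t, then w'(t) = −ξ(w(t)) − β (d/dt)[ξ(w(t))] for all t. -/
open Matrix

/-- In a Hamiltonian game (the Jacobian `J(w)` of the field `ξ` is everywhere
antisymmetric), the consensus-optimization dynamics
`w' = −ξ(w) + β J(w)ᵀ w'` coincides with the centripetal-acceleration dynamics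
`w' = −ξ(w) − β (d/dt) ξ(w(t))`. -/
theorem stmt_16 {n : ℕ} (ξ : (Fin n → ℝ) → (Fin n → ℝ))
    (J : (Fin n → ℝ) → Matrix (Fin n) (Fin n) ℝ)
    (hdiff : ∀ w, HasFDerivAt ξ
      (LinearMap.toContinuousLinearMap (Matrix.mulVecLin (J w))) w)
    (hanti : ∀ w, (J w)ᵀ = -(J w))
    (β : ℝ) (w w' : ℝ → (Fin n → ℝ))
    (hw : ∀ t : ℝ, HasDerivAt w (w' t) t)
    (hode : ∀ t : ℝ, w' t = -ξ (w t) + β • ((J (w t))ᵀ).mulVec (w' t)) :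
    ∀ t : ℝ, w' t = -ξ (w t) - β • deriv (fun s => ξ (w s)) t := by
  intro t
  -- chain rule: `(d/dt) ξ(w(t)) = J(w(t)) w'(t)`
  have hchain : deriv (fun s => ξ (w s)) t = (J (w t)).mulVec (w' t) :=
    ((hdiff (w t)).comp_hasDerivAt t (hw t)).deriv
  have h := hode t
  rwa [hanti, Matrix.neg_mulVec, smul_neg, ← sub_eq_add_neg, ← hchain] at h
end
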